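/- An infinite word w is Sturmian if and only if its privileged complexity satisfies A_n(w) = 1 for all even n ≥ 0 and A_n(w) = 2 for all odd n ≥ 1. -/

import Mathlib

/-- Number of occurrences of `u` as a factor of `w` (positions are 0-indexed). -/
noncomputable def occCount {A : Type*} (u w : List A) : ℕ :=
  Set.ncard {i : ℕ | i + u.length ≤ w.length ∧ (w.drop i).take u.length = u}

/-- `v` is a complete first return to `u`: `u` is a prefix and a suffix of `v`,
and `u` has exactly two occurrences in `v`. -/
def IsCompleteFirstReturn {A : Type*} (v u : List A) : Prop :=
  u <+: v ∧ u <:+ v ∧ occCount u v = 2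

/-- Privileged words: the empty word and the single letters are privileged, and a word of
length at least 2 is privileged if it is a complete first return to a shorter privileged word. -/
inductive Privileged {A : Type*} : List A → Prop where
  | nil : Privileged ([] : List A)
  | single (a : A) : Privileged [a]
  | ret (w u : List A) : 2 ≤ w.length → u.length < w.length → Privileged u →
      IsCompleteFirstReturn w u → Privileged w

/-- A complete return word: a complete first return to some word
(the empty word counted by convention; letters are complete first returns to the empty word). -/
def IsCompleteReturnWord {A : Type*} (v : List A) : Prop :=
  v = [] ∨ ∃ u : List A, IsCompleteFirstReturn v u

/-- Position `i` of `w` (1-based, `1 ≤ i ≤ |w|`) introduces the factor `u`: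
`u` occurs in `w` ending at position `i` and `u` occurs exactly once in the prefix `w[1,i]`. -/
def Introduces {A : Type*} (w : List A) (i : ℕ) (u : List A) : Prop :=
  1 ≤ i ∧ i ≤ w.length ∧ u <:+ w.take i ∧ occCount u (w.take i) = 1

/-- A finite word is rich if it has exactly `|w| + 1` distinct palindromic factors. -/
noncomputable def RichWord {A : Type*} (w : List A) : Prop :=
  Set.ncard {u : List A | u <:+: w ∧ u.reverse = u} = w.length + 1

/-- `u` is a (finite) factor of the infinite word `w`. -/
def IsFactorInf {A : Type*} (w : ℕ → A) (u : List A) : Prop :=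
  ∃ i : ℕ, u = (List.range u.length).map fun k => w (i + k)

/-- A Q-property of finite words. -/
structure IsQProperty {A : Type*} (Q : List A → Prop) : Prop where
  q_nil : Q []
  q_single : ∀ a : A, Q [a]
  ends_at_every_position : ∀ (w : List A) (i : ℕ), 1 ≤ i → i ≤ w.length →
    ∃ u : List A, u ≠ [] ∧ u <:+ w.take i ∧ Q u
  introduces_at_most_one : ∀ (w : List A) (i : ℕ) (u v : List A),
    Introduces w i u → Introduces w i v → Q u → Q v → u = v

/-- Q-complexity of an infinite word: the number of distinct factors of length `n`
having property `Q`. -/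
noncomputable def qComplexityInf {A : Type*} (w : ℕ → A) (Q : List A → Prop) (n : ℕ) : ℕ :=
  Set.ncard {u : List A | IsFactorInf w u ∧ Q u ∧ u.length = n}

/-- Privileged complexity of an infinite word. -/
noncomputable def privComplexityInf {A : Type*} (w : ℕ → A) (n : ℕ) : ℕ :=
  Set.ncard {u : List A | IsFactorInf w u ∧ Privileged u ∧ u.length = n}

/-- Palindromic complexity of an infinite word. -/
noncomputable def palComplexityInf {A : Type*} (w : ℕ → A) (n : ℕ) : ℕ :=
  Set.ncard {u : List A | IsFactorInf w u ∧ u.reverse = u ∧ u.length = n}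

/-- An infinite word is ultimately periodic if it is of the form `u v v v ⋯`
with `v` nonempty. -/
def UltimatelyPeriodic {A : Type*} (w : ℕ → A) : Prop :=
  ∃ u v : List A, v ≠ [] ∧ ∀ n : ℕ, w n =
    if n < u.length then u.getD n (w 0)
    else v.getD ((n - u.length) % v.length) (w 0)

/-- An infinite word is Sturmian if it has exactly `n + 1` distinct factors of
length `n` for every `n`. -/
def Sturmian {A : Type*} (w : ℕ → A) : Prop :=
  ∀ n : ℕ, Set.ncard {u : List A | IsFactorInf w u ∧ u.length = n} = n + 1

/-- A finite binary word is balanced: its set of factors is balanced. -/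
def BalancedWord (x : List Bool) : Prop :=
  ∀ u v : List Bool, u <:+: x → v <:+: x → u.length = v.length →
    ((u.count true : ℤ) - (v.count true : ℤ)).natAbs ≤ 1

/-- `u` is a right special factor of the infinite word `w`. -/
def RightSpecial {A : Type*} (w : ℕ → A) (u : List A) : Prop :=
  ∃ a b : A, a ≠ b ∧ IsFactorInf w (u ++ [a]) ∧ IsFactorInf w (u ++ [b])

/-- The Thue-Morse word: the `n`-th letter is the parity of the number of ones in the
binary expansion of `n` (`false` = 0, `true` = 1). -/
def thueMorse (n : ℕ) : Bool := (Nat.digits 2 n).count 1 % 2 == 1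


/-!
In an aperiodic balanced binary word, complete first returns to palindromes are palindromes, so the
privileged factors are exactly the palindromic ones. Every palindromic factor `u` has exactly one
palindromic extension `a u a`, and therefore the number of palindromes of length `n` depends only
on the parity of `n`: it is `1` or `2`. A Sturmian word is aperiodic, and it is balanced, since the
middle of a shortest unbalanced pair would be a right special palindrome whose occurrences are
incompatible with the right special factor one letter longer.

Conversely, suppose that the privileged complexity is `1, 2, 1, 2, …`. Distinct privileged factors
have first occurrences ending at distinct positions, so there are too many of them for an
ultimately periodic word. If the word were unbalanced, the shortest unbalanced pair would be
`true u true`, `false u false` for a palindrome `u`; up to length `|u| + 1` the balanced theory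
applies, and it shows that there would be too many privileged palindromes of length `|u| + 2`.
An aperiodic balanced word has exactly `n + 1` factors of length `n`.
-/

/-! ### Words -/

section Words

variable {A : Type*}

theorem exists_eq_append_cons_of_ne {u v : List A} (hlen : u.length = v.length) (hne : u ≠ v) :
    ∃ p a b s t, a ≠ b ∧ u = p ++ a :: s ∧ v = p ++ b :: t := by
  induction u generalizing v with
  | nil => exact absurd (List.length_eq_zero_iff.1 hlen.symm).symm hne
  | cons a u ih =>
    obtain _ | ⟨b, v⟩ := v
    · simp at hlen
    by_cases hab : a = b
    · subst hab
      obtain ⟨p, c, d, s, t, hcd, rfl, rfl⟩ := ih (by simpa using hlen) (by simpa using hne)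
      exact ⟨a :: p, c, d, s, t, hcd, rfl, rfl⟩
    · exact ⟨[], a, b, u, v, hab, rfl, rfl⟩

theorem isPrefix_of_isPrefix_append_cons {u p s t : List A} {a b : A} (hab : a ≠ b)
    (hs : u <+: p ++ a :: s) (ht : u <+: p ++ b :: t) : u <+: p := by
  obtain hup | ⟨r, rfl⟩ := List.prefix_or_prefix_of_prefix hs (List.prefix_append p (a :: s))
  · exact hup
  · cases r with
    | nil => simp
    | cons c r => simp_all

theorem exists_eq_append_cons_of_reverse_ne {v : List A} (hv : v.reverse ≠ v) :
    ∃ p a b s, a ≠ b ∧ v = p ++ a :: (s ++ b :: p.reverse) := by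
  induction v using List.bidirectionalRec with
  | nil => simp at hv
  | singleton a => simp at hv
  | cons_append a v b ih =>
    by_cases hab : a = b
    · subst hab
      obtain ⟨p, c, d, s, hcd, rfl⟩ := ih fun h => hv (by simp [h])
      exact ⟨a :: p, c, d, s, hcd, by simp⟩
    · exact ⟨[], a, b, v, hab, by simp⟩

theorem exists_isSuffix_length_eq {u : List A} {n : ℕ} (h : n ≤ u.length) :
    ∃ v, v <:+ u ∧ v.length = n :=
  ⟨u.drop (u.length - n), List.drop_suffix _ _, by rw [List.length_drop]; omega⟩

/-- The words of length `n` in the language `X`. -/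
def wordsOfLength (X : List A → Prop) (n : ℕ) : Set (List A) :=
  {u | X u ∧ u.length = n}

theorem finite_wordsOfLength [Finite A] (X : List A → Prop) (n : ℕ) :
    (wordsOfLength X n).Finite :=
  (List.finite_length_eq A n).subset fun _ h => h.2

theorem ncard_length_lt_eq_sum [Finite A] (X : List A → Prop) (L : ℕ) :
    {u | X u ∧ u.length < L}.ncard = ∑ n ∈ Finset.range L, (wordsOfLength X n).ncard := by
  induction L with
  | zero => simp
  | succ L ih =>
    have hsplit : {u | X u ∧ u.length < L + 1} =
        {u | X u ∧ u.length < L} ∪ wordsOfLength X L := by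
      ext u
      simp [wordsOfLength, ← and_or_left, le_iff_lt_or_eq]
    have hdisj : Disjoint {u | X u ∧ u.length < L} (wordsOfLength X L) :=
      Set.disjoint_left.2 fun u hlt heq => hlt.2.ne heq.2
    rw [hsplit, Set.ncard_union_eq hdisj ((List.finite_length_lt A L).subset fun _ h => h.2)
      (finite_wordsOfLength X L), ih, Finset.sum_range_succ]

/-- A language containing every factor of each of its words. -/
def FactorClosed (X : List A → Prop) : Prop :=
  ∀ ⦃u v⦄, u <:+: v → X v → X u

end Words

/-! ### Complete first returns and privileged words -/

section CompleteFirstReturn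

variable {A B : Type*} {u v : List A}

theorem occCount_eq_ncard (u v : List A) :
    occCount u v = {i | ∃ s t, s ++ u ++ t = v ∧ s.length = i}.ncard := by
  unfold occCount
  congr 1
  ext i
  constructor
  · rintro ⟨hi, hu⟩
    refine ⟨v.take i, (v.drop i).drop u.length, ?_, by rw [List.length_take]; omega⟩
    nth_rewrite 1 [← hu]
    rw [List.append_assoc, List.take_append_drop, List.take_append_drop]
  · rintro ⟨s, t, rfl, rfl⟩
    simp

theorem ncard_eq_two_iff_of_subset_Iic {S : Set ℕ} {m : ℕ} (hS : S ⊆ Set.Iic m) (hzero : 0 ∈ S)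
    (hm : m ∈ S) : S.ncard = 2 ↔ m ≠ 0 ∧ S ⊆ {0, m} := by
  have hfin : S.Finite := (Set.finite_Iic m).subset hS
  have hpair : {0, m} ⊆ S := Set.pair_subset hzero hm
  obtain rfl | hm_ne := eq_or_ne m 0
  · have hle : S.ncard ≤ 1 := by
      simpa using Set.ncard_le_ncard (t := {0}) fun i hi => Nat.le_zero.1 (hS hi)
    exact iff_of_false (by omega) (by simp)
  · rw [and_iff_right hm_ne, ← Set.ncard_pair hm_ne.symm]
    exact ⟨fun hcard => (Set.eq_of_subset_of_ncard_le hpair hcard.le hfin).ge,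
      fun hsub => congrArg Set.ncard (hsub.antisymm hpair)⟩

/-- Unlike the count of occurrences, this form is visibly symmetric under reversal. -/
theorem isCompleteFirstReturn_iff :
    IsCompleteFirstReturn v u ↔
      u <+: v ∧ u <:+ v ∧ u ≠ v ∧ ∀ s t, s ++ u ++ t = v → s = [] ∨ t = [] := by
  unfold IsCompleteFirstReturn
  rw [occCount_eq_ncard]
  refine and_congr_right fun ⟨t₀, ht₀⟩ => and_congr_right fun ⟨s₀, hs₀⟩ => ?_
  have hlen₀ : s₀.length + u.length = v.length := by simp [← hs₀]
  have hlen {s t : List A} (h : s ++ u ++ t = v) :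
      s.length + u.length + t.length = v.length := by
    simp [← h, add_assoc]
  rw [ncard_eq_two_iff_of_subset_Iic (m := s₀.length)]
  · refine and_congr (by simp [← hs₀]) ⟨fun h s t hst => ?_, ?_⟩
    · have := hlen hst
      refine (h ⟨s, t, hst, rfl⟩).imp List.length_eq_zero_iff.1 fun h => ?_
      rw [Set.mem_singleton_iff] at h
      exact List.length_eq_zero_iff.1 (by omega)
    · rintro h _ ⟨s, t, hst, rfl⟩
      have := hlen hst
      refine (h s t hst).imp List.length_eq_zero_iff.2 fun h => ?_
      rw [List.length_eq_zero_iff.2 h] at this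
      exact Set.mem_singleton_iff.2 (by omega)
  · rintro _ ⟨s, t, hst, rfl⟩
    have := hlen hst
    exact Set.mem_Iic.2 (by omega)
  · exact ⟨[], t₀, by simpa, rfl⟩
  · exact ⟨s₀, [], by simpa, rfl⟩

theorem IsCompleteFirstReturn.length_lt (h : IsCompleteFirstReturn v u) : u.length < v.length := by
  obtain ⟨hpre, -, hne, -⟩ := isCompleteFirstReturn_iff.1 h
  exact lt_of_le_of_ne hpre.length_le fun hlen => hne (hpre.eq_of_length hlen)

theorem IsCompleteFirstReturn.reverse (h : IsCompleteFirstReturn v u) :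
    IsCompleteFirstReturn v.reverse u.reverse := by
  obtain ⟨hpre, hsuf, hne, hocc⟩ := isCompleteFirstReturn_iff.1 h
  refine isCompleteFirstReturn_iff.2
    ⟨List.reverse_prefix.2 hsuf, List.reverse_suffix.2 hpre, by simpa using hne, fun s t hst => ?_⟩
  have := hocc t.reverse s.reverse (by simpa using congrArg List.reverse hst)
  simpa [or_comm] using this

theorem exists_isCompleteFirstReturn_isPrefix {s : List A} (hs : s ≠ []) (h : u <+: s ++ u) :
    ∃ v, v <+: s ++ u ∧ IsCompleteFirstReturn v u := by
  induction hn : s.length using Nat.strong_induction_on generalizing s with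
  | _ n ih =>
  by_cases hocc : ∀ s' t', s' ++ u ++ t' = s ++ u → s' = [] ∨ t' = []
  · exact ⟨s ++ u, List.prefix_rfl, isCompleteFirstReturn_iff.2
      ⟨h, List.suffix_append s u, by simpa using hs, hocc⟩⟩
  · push Not at hocc
    obtain ⟨s', t', heq, hs', ht'⟩ := hocc
    have hpre : s' ++ u <+: s ++ u := ⟨t', heq⟩
    have hlt : s'.length < n := by
      have := congrArg List.length heq
      have := List.length_pos_iff.2 ht'
      simp only [List.length_append] at *
      omega
    obtain ⟨v, hv, hret⟩ := ih _ hlt hs'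
      (List.prefix_of_prefix_length_le h hpre (by simp)) rfl
    exact ⟨v, hv.trans hpre, hret⟩

theorem privileged_of_length_le_one (h : u.length ≤ 1) : Privileged u := by
  obtain _ | ⟨a, _ | ⟨b, u⟩⟩ := u
  · exact .nil
  · exact .single a
  · simp at h

theorem Privileged.isPrefix_of_isSuffix (hu : Privileged u) (hv : Privileged v) (h : u <:+ v) :
    u <+: v := by
  induction hn : v.length using Nat.strong_induction_on generalizing u v with
  | _ n ih =>
  subst hn
  obtain rfl | huv := eq_or_ne u v
  · exact List.prefix_rfl
  have hlt : u.length < v.length := h.length_le.lt_of_ne fun hlen => huv (h.eq_of_length hlen)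
  cases hv with
  | nil => simp at hlt
  | single a => simp_all
  | ret _ v₀ _ hv₀_lt hv₀ hret =>
    obtain ⟨hpre, hsuf, -, hocc⟩ := isCompleteFirstReturn_iff.1 hret
    obtain hle | hge := List.suffix_or_suffix_of_suffix h hsuf
    · exact (ih _ hv₀_lt hu hv₀ hle rfl).trans hpre
    · obtain ⟨t, rfl⟩ := ih _ hlt hv₀ hu hge rfl
      obtain ⟨s, rfl⟩ := h
      obtain rfl | rfl := hocc s t (by simp)
      · exact absurd rfl huv
      · simpa using hpre

theorem occCount_map {g : A → B} (hg : g.Injective) (u v : List A) :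
    occCount (u.map g) (v.map g) = occCount u v := by
  simp [occCount, ← List.map_drop, ← List.map_take, (List.map_injective_iff.2 hg).eq_iff]

theorem isCompleteFirstReturn_map_iff {g : A → B} (hg : g.Injective) :
    IsCompleteFirstReturn (v.map g) (u.map g) ↔ IsCompleteFirstReturn v u := by
  simp [IsCompleteFirstReturn, occCount_map hg, List.prefix_map_iff_of_injective hg,
    List.suffix_map_iff_of_injective hg]

theorem Privileged.map {g : A → B} (hg : g.Injective) (h : Privileged u) :
    Privileged (u.map g) := by
  induction h with
  | nil => exact .nil
  | single a => exact .single (g a)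
  | ret v u hv hlt _ hret ih =>
    exact .ret _ _ (by simpa) (by simpa) ih ((isCompleteFirstReturn_map_iff hg).2 hret)

theorem privileged_map_iff {g : A → B} (hg : g.Injective) :
    Privileged (u.map g) ↔ Privileged u := by
  refine ⟨fun h => ?_, .map hg⟩
  generalize hx : u.map g = x at h
  induction h generalizing u with
  | nil => exact privileged_of_length_le_one (by simp [List.map_eq_nil_iff.1 hx])
  | single a => exact privileged_of_length_le_one (by simpa using (congrArg List.length hx).le)
  | ret x y hx₂ hlt _ hret ih =>
    subst hx
    obtain ⟨v, -, rfl⟩ := List.prefix_map_iff.1 hret.1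
    exact .ret _ _ (by simpa using hx₂) (by simpa using hlt) (ih rfl)
      ((isCompleteFirstReturn_map_iff hg).1 hret)

end CompleteFirstReturn

/-! ### Windows of an infinite word -/

section Window

variable {A : Type*} {w : ℕ → A} {u v : List A} {i j m n p N : ℕ}

/-- The factor `w i, …, w (i + n - 1)` of an infinite word read in the window of length `n`
at position `i`. -/
def window (w : ℕ → A) (i n : ℕ) : List A :=
  (List.range n).map fun k => w (i + k)

@[simp]
theorem length_window (w : ℕ → A) (i n : ℕ) : (window w i n).length = n := by
  simp [window]

theorem window_eq_iff : window w i n = window w j n ↔ ∀ k < n, w (i + k) = w (j + k) := by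
  simp [window, List.map_inj_left]

theorem window_add (w : ℕ → A) (i m n : ℕ) :
    window w i (m + n) = window w i m ++ window w (i + m) n := by
  simp [window, List.range_add, Function.comp_def, add_assoc]

theorem window_succ (w : ℕ → A) (i n : ℕ) : window w i (n + 1) = window w i n ++ [w (i + n)] := by
  simp [window, List.range_succ]

theorem apply_eq_getElem_of_window_eq {k : ℕ} (h : window w i u.length = u) (hk : k < u.length) :
    w (i + k) = u[k] := by
  simp [← List.getElem_of_eq h (by simpa), window]

theorem window_add_congr {d : ℕ} (h : window w i n = window w j n) (hd : d + m ≤ n) :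
    window w (i + d) m = window w (j + d) m :=
  window_eq_iff.2 fun k hk => by
    simpa only [add_assoc] using window_eq_iff.1 h (d + k) (by omega)

theorem window_eq_of_append {s t : List A} (h : window w i n = s ++ u ++ t) :
    window w (i + s.length) u.length = u := by
  have hn : n = s.length + u.length + t.length := by simpa [add_assoc] using congrArg List.length h
  rw [hn, window_add, window_add] at h
  exact (List.append_inj (List.append_inj h (by simp)).1 (by simp)).2

theorem isFactorInf_window (w : ℕ → A) (i n : ℕ) : IsFactorInf w (window w i n) :=
  ⟨i, by simp [window]⟩

theorem IsFactorInf.exists_window_eq (h : IsFactorInf w u) : ∃ i, window w i u.length = u :=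
  h.imp fun _ hi => hi.symm

theorem factorClosed_isFactorInf (w : ℕ → A) : FactorClosed (IsFactorInf w) := by
  rintro u _ ⟨s, t, rfl⟩ h
  obtain ⟨i, hi⟩ := h.exists_window_eq
  rw [← window_eq_of_append hi]
  exact isFactorInf_window _ _ _

theorem IsFactorInf.exists_append_singleton (h : IsFactorInf w u) :
    ∃ a, IsFactorInf w (u ++ [a]) := by
  obtain ⟨i, hi⟩ := h.exists_window_eq
  refine ⟨w (i + u.length), ?_⟩
  nth_rewrite 1 [← hi]
  rw [← window_succ]
  exact isFactorInf_window _ _ _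

theorem isFactorInf_append_singleton_iff {a : A} :
    IsFactorInf w (u ++ [a]) ↔ ∃ i, window w i u.length = u ∧ w (i + u.length) = a := by
  constructor
  · intro h
    obtain ⟨i, hi⟩ := h.exists_window_eq
    rw [List.length_append, List.length_singleton, window_succ] at hi
    obtain ⟨hu, ha⟩ := List.append_inj hi (by simp)
    exact ⟨i, hu, by simpa using ha⟩
  · rintro ⟨i, hu, rfl⟩
    nth_rewrite 1 [← hu]
    rw [← window_succ]
    exact isFactorInf_window _ _ _

theorem isFactorInf_comp_iff {B : Type*} (g : A → B) {x : List B} :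
    IsFactorInf (g ∘ w) x ↔ ∃ u, IsFactorInf w u ∧ u.map g = x := by
  have hmap (i n : ℕ) : window (g ∘ w) i n = (window w i n).map g := by simp [window]
  constructor
  · intro h
    obtain ⟨i, hi⟩ := h.exists_window_eq
    exact ⟨_, isFactorInf_window w i x.length, by rw [← hmap, hi]⟩
  · rintro ⟨u, hu, rfl⟩
    obtain ⟨i, hi⟩ := hu.exists_window_eq
    rw [← hi, ← hmap]
    exact isFactorInf_window _ _ _

theorem ultimatelyPeriodic_iff :
    UltimatelyPeriodic w ↔ ∃ N p, 0 < p ∧ ∀ x ≥ N, w (x + p) = w x := by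
  constructor
  · rintro ⟨u, v, hv, h⟩
    refine ⟨u.length, v.length, List.length_pos_iff.2 hv, fun x hx => ?_⟩
    rw [h (x + v.length), h x, if_neg (by omega), if_neg (by omega),
      show x + v.length - u.length = x - u.length + v.length by omega, Nat.add_mod_right]
  · rintro ⟨N, p, hp, h⟩
    refine ⟨window w 0 N, window w N p, List.ne_nil_of_length_pos (by simpa), fun n => ?_⟩
    have hmod : ∀ k, w (N + k) = w (N + k % p) := by
      intro k
      induction k using Nat.strong_induction_on with
      | _ k ih =>
      obtain hk | hk := lt_or_ge k p
      · rw [Nat.mod_eq_of_lt hk]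
      · obtain ⟨k, rfl⟩ := Nat.exists_eq_add_of_le' hk
        rw [← add_assoc, h _ (by omega), ih k (by omega), Nat.add_mod_right]
    rw [length_window, length_window]
    split_ifs with hn
    · simp [window, hn]
    · have hlt := Nat.mod_lt (n - N) hp
      rw [List.getD_eq_getElem _ _ (by simpa)]
      simpa [window, Nat.add_sub_cancel' (not_lt.1 hn)] using hmod (n - N)

theorem exists_window_eq_lt (hp : 0 < p) (h : ∀ x ≥ N, w (x + p) = w x) (i n : ℕ) :
    ∃ j < N + p, window w j n = window w i n := by
  induction i using Nat.strong_induction_on with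
  | _ i ih =>
  obtain hi | hi := lt_or_ge i (N + p)
  · exact ⟨i, hi, rfl⟩
  · obtain ⟨j, hj, hjw⟩ := ih (i - p) (by omega)
    refine ⟨j, hj, hjw.trans (window_eq_iff.2 fun k _ => ?_)⟩
    rw [← h _ (by omega), show i - p + k + p = i + k by omega]

theorem ultimatelyPeriodic_of_window_step (hp : 0 < p) (hpn : p ≤ n)
    (hv : IsFactorInf w v) (hn : v.length = n)
    (hstep : ∀ x, window w x n = v → window w (x + p) n = v) : UltimatelyPeriodic w := by
  subst hn
  obtain ⟨i, hi⟩ := hv.exists_window_eq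
  have hocc : ∀ k, window w (i + k * p) v.length = v := by
    intro k
    induction k with
    | zero => simpa
    | succ k ih => simpa [add_mul, add_assoc] using hstep _ ih
  refine ultimatelyPeriodic_iff.2 ⟨i, p, hp, fun x hx => ?_⟩
  have hdiv := Nat.div_add_mod (x - i) p
  have hlt := Nat.mod_lt (x - i) hp
  have heq := window_eq_iff.1 ((hocc ((x - i) / p + 1)).trans (hocc ((x - i) / p)).symm)
    ((x - i) % p) (by omega)
  rw [add_mul, one_mul, mul_comm] at heq
  convert heq using 2 <;> omega

end Window

/-! ### Right special factors -/

section RightSpecial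

variable {A : Type*} {w : ℕ → A} {u v : List A} {i j n x : ℕ}

theorem RightSpecial.of_isSuffix (hv : RightSpecial w v) (h : u <:+ v) : RightSpecial w u := by
  obtain ⟨a, b, hab, ha, hb⟩ := hv
  obtain ⟨s, rfl⟩ := h
  have hext {c : A} (hc : IsFactorInf w (s ++ u ++ [c])) : IsFactorInf w (u ++ [c]) :=
    factorClosed_isFactorInf w ⟨s, [], by simp⟩ hc
  exact ⟨a, b, hab, hext ha, hext hb⟩

theorem rightSpecial_window (h : window w i n = window w j n) (hne : w (i + n) ≠ w (j + n)) :
    RightSpecial w (window w i n) :=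
  ⟨w (i + n), w (j + n), hne, isFactorInf_append_singleton_iff.2 ⟨i, by simp⟩,
    isFactorInf_append_singleton_iff.2 ⟨j, by simp [h]⟩⟩

theorem ultimatelyPeriodic_of_forall_not_rightSpecial (hij : i < j)
    (h : window w i n = window w j n)
    (hrs : ∀ x, i ≤ x → x < j → ¬RightSpecial w (window w x n)) : UltimatelyPeriodic w := by
  have hrepeat : ∀ k, window w (i + k) n = window w (j + k) n ∧
      ¬RightSpecial w (window w (i + k) n) := by
    intro k
    induction k using Nat.strong_induction_on with
    | _ k ih =>
    constructor
    · obtain _ | k := k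
      · exact h
      · obtain ⟨heq, hnot⟩ := ih k k.lt_succ_self
        have hnext : w (i + k + n) = w (j + k + n) := by_contra fun hne =>
          hnot (rightSpecial_window heq hne)
        have hsucc : window w (i + k) (n + 1) = window w (j + k) (n + 1) := by
          rw [window_succ, window_succ, heq, hnext]
        exact window_add_congr (d := 1) hsucc (by omega)
    · obtain hk | hk := lt_or_ge (i + k) j
      · exact hrs _ (by omega) hk
      · obtain ⟨heq, hnot⟩ := ih (i + k - j) (by omega)
        rwa [show i + k = j + (i + k - j) by omega, ← heq]
  refine ultimatelyPeriodic_iff.2 ⟨i + n, j - i, by omega, fun x hx => ?_⟩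
  obtain ⟨heq, hnot⟩ := hrepeat (x - n - i)
  have hnext := by_contra fun hne => hnot (rightSpecial_window heq hne)
  rw [show i + (x - n - i) + n = x by omega] at hnext
  rw [hnext]
  congr 1
  omega

theorem exists_rightSpecial_window [Finite A] (hw : ¬UltimatelyPeriodic w) (n x : ℕ) :
    ∃ d < (wordsOfLength (IsFactorInf w) n).ncard, RightSpecial w (window w (x + d) n) := by
  set N := (wordsOfLength (IsFactorInf w) n).ncard
  obtain ⟨a, -, b, hb, hab, heq⟩ : ∃ a ∈ Finset.range (N + 1), ∃ b ∈ Finset.range (N + 1),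
      a < b ∧ window w (x + a) n = window w (x + b) n := by
    obtain ⟨a, ha, b, hb, hne, heq⟩ := Finset.exists_ne_map_eq_of_card_lt_of_maps_to
      (s := Finset.range (N + 1)) (t := (finite_wordsOfLength (IsFactorInf w) n).toFinset)
      (f := fun d => window w (x + d) n)
      (by rw [← Set.ncard_eq_toFinset_card _ (finite_wordsOfLength _ n), Finset.card_range]
          exact N.lt_succ_self)
      (fun d _ => (Set.Finite.mem_toFinset _).2 ⟨isFactorInf_window _ _ _, length_window _ _ _⟩)
    obtain hlt | hlt := lt_or_gt_of_ne hne
    exacts [⟨a, ha, b, hb, hlt, heq⟩, ⟨b, hb, a, ha, hlt, heq.symm⟩]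
  by_contra! hnot
  refine hw (ultimatelyPeriodic_of_forall_not_rightSpecial (by omega) heq fun y hxy hyb => ?_)
  have := hnot (y - x) (by rw [Finset.mem_range] at hb; omega)
  rwa [show x + (y - x) = y by omega] at this

theorem ncard_wordsOfLength_isFactorInf_zero (w : ℕ → A) :
    (wordsOfLength (IsFactorInf w) 0).ncard = 1 := by
  rw [Set.ncard_eq_one]
  refine ⟨[], Set.ext fun u => ⟨fun hu => List.length_eq_zero_iff.1 hu.2, ?_⟩⟩
  rintro rfl
  exact ⟨isFactorInf_window w 0 0, rfl⟩

end RightSpecial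

section Bool

variable {w : ℕ → Bool} {u : List Bool}

theorem rightSpecial_iff_forall : RightSpecial w u ↔ ∀ c, IsFactorInf w (u ++ [c]) := by
  constructor
  · rintro ⟨a, b, hab, ha, hb⟩ c
    obtain rfl | rfl : c = a ∨ c = b := by
      cases a <;> cases b <;> cases c <;> simp_all
    exacts [ha, hb]
  · exact fun h => ⟨true, false, by decide, h true, h false⟩

theorem ncard_wordsOfLength_succ (X : List Bool → Prop) (n : ℕ) :
    (wordsOfLength X (n + 1)).ncard =
      (wordsOfLength (fun u => ∃ c, X (u ++ [c])) n).ncard +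
        (wordsOfLength (fun u => ∀ c, X (u ++ [c])) n).ncard := by
  let E (c : Bool) : Set (List Bool) := wordsOfLength (fun u => X (u ++ [c])) n
  have hE (c : Bool) : (E c).Finite := finite_wordsOfLength _ n
  have hinj (c : Bool) : Function.Injective fun u : List Bool => u ++ [c] :=
    List.append_left_injective [c]
  have hsplit : wordsOfLength X (n + 1) = (· ++ [false]) '' E false ∪ (· ++ [true]) '' E true := by
    ext u
    obtain rfl | ⟨u, c, rfl⟩ := List.eq_nil_or_concat u <;>
      [skip; cases c] <;> simp [wordsOfLength, E]
  have hdisj : Disjoint ((· ++ [false]) '' E false) ((· ++ [true]) '' E true) :=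
    Set.disjoint_left.2 (by rintro _ ⟨u, -, rfl⟩ ⟨v, -, h⟩; simp at h)
  have hunion : E false ∪ E true = wordsOfLength (fun u => ∃ c, X (u ++ [c])) n := by
    ext u
    simp [wordsOfLength, E, or_and_right]
  have hinter : E false ∩ E true = wordsOfLength (fun u => ∀ c, X (u ++ [c])) n := by
    ext u
    simp [wordsOfLength, E, ← and_and_right]
  rw [hsplit, Set.ncard_union_eq hdisj ((hE _).image _) ((hE _).image _),
    Set.ncard_image_of_injective _ (hinj _), Set.ncard_image_of_injective _ (hinj _), ← hunion,
    ← hinter, Set.ncard_union_add_ncard_inter _ _ (hE _) (hE _)]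

theorem ncard_wordsOfLength_isFactorInf_succ (w : ℕ → Bool) (n : ℕ) :
    (wordsOfLength (IsFactorInf w) (n + 1)).ncard =
      (wordsOfLength (IsFactorInf w) n).ncard + (wordsOfLength (RightSpecial w) n).ncard := by
  have hext : (fun u => ∃ c, IsFactorInf w (u ++ [c])) = IsFactorInf w := by
    ext u
    exact ⟨fun ⟨c, hc⟩ => factorClosed_isFactorInf w (List.prefix_append u [c]).isInfix hc,
      IsFactorInf.exists_append_singleton⟩
  have hrs : (fun u => ∀ c, IsFactorInf w (u ++ [c])) = RightSpecial w :=
    funext fun u => propext rightSpecial_iff_forall.symm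
  rw [ncard_wordsOfLength_succ, hext, hrs]

theorem exists_rightSpecial (hw : ¬UltimatelyPeriodic w) (n : ℕ) :
    ∃ u, RightSpecial w u ∧ u.length = n := by
  obtain ⟨d, -, hd⟩ := exists_rightSpecial_window hw n 0
  exact ⟨_, hd, length_window _ _ _⟩

theorem lt_ncard_wordsOfLength_isFactorInf (hw : ¬UltimatelyPeriodic w) (n : ℕ) :
    n < (wordsOfLength (IsFactorInf w) n).ncard := by
  induction n with
  | zero => simp [ncard_wordsOfLength_isFactorInf_zero]
  | succ n ih =>
    have := (Set.ncard_pos (finite_wordsOfLength _ n)).2 (exists_rightSpecial hw n)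
    rw [ncard_wordsOfLength_isFactorInf_succ]
    omega

end Bool

/-! ### Balanced languages -/

section Balance

variable {X : List Bool → Prop} {w : ℕ → Bool} {u v s t : List Bool} {a b : Bool} {m n : ℕ}

/-- A language is balanced up to length `m` if any two of its words of the same length `≤ m`
differ by at most one in their number of letters `true`. -/
def BalancedUpTo (X : List Bool → Prop) (m : ℕ) : Prop :=
  ∀ ⦃u v⦄, X u → X v → u.length = v.length → u.length ≤ m → u.count true ≤ v.count true + 1

theorem BalancedUpTo.eq_of_cons_concat (hX : BalancedUpTo X m) (hst : s.Perm t)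
    (hs : X (a :: (s ++ [a]))) (ht : X (b :: (t ++ [b]))) (hm : s.length + 2 ≤ m) : a = b := by
  have hlen := hst.length_eq
  have hcount := hst.count_eq true
  have h₁ := hX hs ht (by simp [hlen]) (by grind)
  have h₂ := hX ht hs (by simp [hlen]) (by grind)
  cases a <;> cases b <;> simp_all

theorem BalancedUpTo.eq_of_forall_append (hX : BalancedUpTo X m) (hfac : FactorClosed X)
    (hu : ∀ c, X (u ++ [c])) (hv : ∀ c, X (v ++ [c])) (hlen : u.length = v.length)
    (hm : u.length < m) : u = v := by
  by_contra hne
  obtain ⟨p, a, b, s, t, hab, hu', hv'⟩ :=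
    exists_eq_append_cons_of_ne (by simpa using hlen) (List.reverse_injective.ne hne)
  rw [List.reverse_eq_iff] at hu' hv'
  subst hu' hv'
  refine hab (hX.eq_of_cons_concat (.refl p.reverse) (hfac ?_ (hu a)) (hfac ?_ (hv b)) ?_)
  · exact ⟨s.reverse, [], by simp⟩
  · exact ⟨t.reverse, [], by simp⟩
  · simp only [List.reverse_append, List.reverse_cons, List.length_append, List.length_reverse,
      List.length_cons, List.length_nil] at hm ⊢
    omega

theorem BalancedUpTo.ncard_wordsOfLength_le (hX : BalancedUpTo X m) (hfac : FactorClosed X)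
    (hn : n ≤ m) : (wordsOfLength X n).ncard ≤ n + 1 := by
  induction n with
  | zero =>
    exact (Set.ncard_le_ncard (fun u hu => List.length_eq_zero_iff.1 hu.2)
      (Set.finite_singleton [])).trans_eq (Set.ncard_singleton _)
  | succ n ih =>
    have hext : wordsOfLength (fun u => ∃ c, X (u ++ [c])) n ⊆ wordsOfLength X n :=
      fun u ⟨⟨c, hc⟩, hlen⟩ => ⟨hfac (List.prefix_append u [c]).isInfix hc, hlen⟩
    have hspecial : (wordsOfLength (fun u => ∀ c, X (u ++ [c])) n).ncard ≤ 1 :=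
      (Set.ncard_le_one (finite_wordsOfLength _ n)).2 fun u hu v hv =>
        hX.eq_of_forall_append hfac hu.1 hv.1 (hu.2.trans hv.2.symm) (by have := hu.2; omega)
    rw [ncard_wordsOfLength_succ]
    have := Set.ncard_le_ncard hext (finite_wordsOfLength X n)
    have := ih (by omega)
    omega

theorem FactorClosed.or_reverse {A : Type*} {X : List A → Prop} (hfac : FactorClosed X) :
    FactorClosed fun u => X u ∨ X u.reverse :=
  fun _ _ h => Or.imp (hfac h) (hfac (List.reverse_infix.2 h))

theorem BalancedUpTo.or_reverse (hX : BalancedUpTo X m) :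
    BalancedUpTo (fun u => X u ∨ X u.reverse) m := by
  rintro u v (hu | hu) (hv | hv) hlen hm <;> simpa using hX hu hv (by simpa) (by simpa)

theorem BalancedUpTo.eq_of_rightSpecial (hbal : BalancedUpTo (IsFactorInf w) m)
    (hu : RightSpecial w u) (hv : RightSpecial w v) (hlen : u.length = v.length)
    (hm : u.length < m) : u = v :=
  hbal.eq_of_forall_append (factorClosed_isFactorInf w) (rightSpecial_iff_forall.1 hu)
    (rightSpecial_iff_forall.1 hv) hlen hm

theorem BalancedUpTo.ncard_wordsOfLength_isFactorInf
    (hbal : BalancedUpTo (IsFactorInf w) m) (hw : ¬UltimatelyPeriodic w) (hn : n ≤ m) :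
    (wordsOfLength (IsFactorInf w) n).ncard = n + 1 :=
  (hbal.ncard_wordsOfLength_le (factorClosed_isFactorInf w) hn).antisymm
    (lt_ncard_wordsOfLength_isFactorInf hw n)

/-- Adding the reversals of all factors keeps the language balanced, so it cannot increase the
number of words of each length, which is already the largest possible. -/
theorem BalancedUpTo.isFactorInf_reverse (hbal : BalancedUpTo (IsFactorInf w) m)
    (hw : ¬UltimatelyPeriodic w) (hu : IsFactorInf w u) (hm : u.length ≤ m) :
    IsFactorInf w u.reverse := by
  have hsub : wordsOfLength (IsFactorInf w) u.length ⊆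
      wordsOfLength (fun u => IsFactorInf w u ∨ IsFactorInf w u.reverse) u.length :=
    fun v hv => ⟨.inl hv.1, hv.2⟩
  have hcard := (hbal.or_reverse.ncard_wordsOfLength_le (factorClosed_isFactorInf w).or_reverse
    hm).trans (lt_ncard_wordsOfLength_isFactorInf hw u.length)
  have hmem : u.reverse ∈ wordsOfLength (IsFactorInf w) u.length := by
    rw [Set.eq_of_subset_of_ncard_le hsub hcard (finite_wordsOfLength _ _)]
    exact ⟨.inr (by simpa), by simp⟩
  exact hmem.1

end Balance

section MinimalUnbalancedPair

variable {X : List Bool → Prop} {u v : List Bool}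

theorem eq_of_count_take_le_of_count_drop_le (hlen : u.length = v.length)
    (hcount : u.count true = v.count true)
    (htake : ∀ k ≤ u.length, (u.take k).count true ≤ (v.take k).count true)
    (hdrop : ∀ k ≤ u.length, (u.drop k).count true ≤ (v.drop k).count true) : u = v := by
  by_contra hne
  obtain ⟨p, a, b, s, t, hab, rfl, rfl⟩ := exists_eq_append_cons_of_ne hlen hne
  have htake := htake (p.length + 1) (by simp)
  have hdrop := hdrop (p.length + 1) (by simp)
  cases a <;> cases b <;> simp_all [List.take_append, List.drop_append]

theorem FactorClosed.cons_take {A : Type*} {X : List A → Prop} {u : List A} {a b : A}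
    (hfac : FactorClosed X) (h : X (a :: (u ++ [b]))) (k : ℕ) : X (a :: u.take k) :=
  hfac ⟨[], u.drop k ++ [b], by simp [← List.append_assoc]⟩ h

theorem FactorClosed.drop_concat {A : Type*} {X : List A → Prop} {u : List A} {a b : A}
    (hfac : FactorClosed X) (h : X (a :: (u ++ [b]))) (k : ℕ) : X (u.drop k ++ [b]) :=
  hfac ⟨a :: u.take k, [], by simp [← List.append_assoc]⟩ h

theorem BalancedUpTo.eq_of_true_false (hX : BalancedUpTo X (u.length + 1)) (hfac : FactorClosed X)
    (hu : X (true :: (u ++ [true]))) (hv : X (false :: (v ++ [false])))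
    (hlen : u.length = v.length) (hcount : u.count true = v.count true) : u = v := by
  refine eq_of_count_take_le_of_count_drop_le hlen hcount (fun k _ => ?_) fun k _ => ?_
  · simpa using hX (hfac.cons_take hu k) (hfac.cons_take hv k) (by simp [hlen]) (by simp)
  · simpa using hX (hfac.drop_concat hu k) (hfac.drop_concat hv k) (by simp [hlen]) (by simp)

theorem BalancedUpTo.reverse_eq_of_true_false (hX : BalancedUpTo X (u.length + 1))
    (hfac : FactorClosed X) (ht : X (true :: (u ++ [true]))) (hf : X (false :: (u ++ [false]))) :
    u.reverse = u := by
  refine (eq_of_count_take_le_of_count_drop_le (by simp) (by simp)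
    (fun k hk => ?_) fun k _ => ?_).symm
  · simpa [List.take_reverse] using
      hX (hfac.cons_take ht k) (hfac.drop_concat hf (u.length - k)) (by grind) (by simp)
  · simpa [List.drop_reverse] using
      hX (hfac.drop_concat ht k) (hfac.cons_take hf (u.length - k)) (by simp) (by simp)

/-- The middle of a shortest unbalanced pair. -/
theorem exists_unbalanced_palindrome (hfac : FactorClosed X) (h : ¬∀ m, BalancedUpTo X m) :
    ∃ u, u.reverse = u ∧ BalancedUpTo X (u.length + 1) ∧ ∀ c, X (c :: (u ++ [c])) := by
  classical
  obtain ⟨m, hm, hmin⟩ : ∃ m, ¬BalancedUpTo X m ∧ ∀ k < m, BalancedUpTo X k := by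
    have h := not_forall.1 h
    exact ⟨Nat.find h, Nat.find_spec h, fun k hk => not_not.1 (Nat.find_min h hk)⟩
  unfold BalancedUpTo at hm
  push Not at hm
  obtain ⟨x, y, hx, hy, hlen, hxm, hcount⟩ := hm
  have hle : x.count true ≤ x.length := List.count_le_length
  obtain ⟨a, u, b, rfl⟩ : ∃ a u b, x = a :: (u ++ [b]) := by
    obtain _ | ⟨a, x⟩ := x
    · simp at hcount
    obtain rfl | ⟨u, b, rfl⟩ := List.eq_nil_or_concat x
    · exact absurd (hcount.trans_le hle) (by simp)
    · exact ⟨a, u, b, by simp⟩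
  obtain ⟨c, v, d, rfl⟩ : ∃ c v d, y = c :: (v ++ [d]) := by
    obtain _ | ⟨c, y⟩ := y
    · simp at hlen
    obtain rfl | ⟨v, d, rfl⟩ := List.eq_nil_or_concat y
    · simp at hlen
    · exact ⟨c, v, d, by simp⟩
  have huv : v.length = u.length := by simpa using hlen.symm
  have hX : BalancedUpTo X (u.length + 1) := hmin _ (by grind)
  have hinit := hX (u := a :: u) (v := c :: v) (hfac ⟨[], [b], by simp⟩ hx)
    (hfac ⟨[], [d], by simp⟩ hy) (by simp [huv]) (by simp)
  have htail := hX (u := u ++ [b]) (v := v ++ [d]) (hfac ⟨[a], [], by simp⟩ hx)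
    (hfac ⟨[c], [], by simp⟩ hy) (by simp [huv]) (by simp)
  obtain ⟨rfl, rfl, rfl, rfl, huv_count⟩ :
      a = true ∧ b = true ∧ c = false ∧ d = false ∧ u.count true = v.count true := by
    cases a <;> cases b <;> cases c <;> cases d <;> simp_all <;> omega
  obtain rfl := hX.eq_of_true_false hfac hx hy huv.symm huv_count
  exact ⟨u, hX.reverse_eq_of_true_false hfac hx hy, hX, Bool.forall_bool.2 ⟨hy, hx⟩⟩

end MinimalUnbalancedPair

/-! ### Complete first returns to palindromes -/

section PalindromicReturn

variable {w : ℕ → Bool} {u v v' p q y z s t : List Bool} {a b : Bool} {m n x : ℕ}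

theorem BalancedUpTo.isSuffix_of_rightSpecial (hbal : BalancedUpTo (IsFactorInf w) m)
    (hp : RightSpecial w p) (hq : RightSpecial w q) (hle : p.length ≤ q.length)
    (hm : p.length < m) : p <:+ q := by
  obtain ⟨q', hq', hlen⟩ := exists_isSuffix_length_eq hle
  exact hbal.eq_of_rightSpecial hp (hq.of_isSuffix hq') hlen.symm hm ▸ hq'

/-- The shorter of the two prefixes is also a suffix of the longer one, which would give a third
occurrence of `u` in `v`. -/
theorem IsCompleteFirstReturn.eq_of_rightSpecial (hv : IsCompleteFirstReturn v u)
    (hbal : BalancedUpTo (IsFactorInf w) m) (hm : v.length ≤ m)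
    (hp : RightSpecial w p) (hpv : p ++ [a] <+: v) (hup : u <+: p)
    (hq : RightSpecial w q) (hqv : q ++ [b] <+: v) (huq : u <+: q) : p = q := by
  wlog hle : p.length ≤ q.length generalizing p q a b
  · exact (this hq hqv huq hp hpv hup (by omega)).symm
  have hlt : q.length < v.length := by simpa using hqv.length_le
  obtain ⟨s, rfl⟩ := hbal.isSuffix_of_rightSpecial hp hq hle (by omega)
  obtain ⟨p, rfl⟩ := hup
  obtain ⟨t, rfl⟩ := hqv
  obtain ⟨-, -, -, hocc⟩ := isCompleteFirstReturn_iff.1 hv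
  obtain rfl | h := hocc s (p ++ b :: t) (by simp)
  · rfl
  · simp at h

theorem IsCompleteFirstReturn.exists_append_singleton_isPrefix (hv : IsCompleteFirstReturn v u)
    (hbal : BalancedUpTo (IsFactorInf w) m) (hm : v.length ≤ m) (hvw : IsFactorInf w v)
    (hp : RightSpecial w p) (hpv : p ++ [a] <+: v) (hup : u <+: p)
    (hy : IsFactorInf w y) (hlen : y.length = v.length) (huy : u <+: y) (hne : y ≠ v) :
    ∃ c ≠ a, p ++ [c] <+: y := by
  obtain ⟨q, c, d, s, t, hcd, rfl, rfl⟩ := exists_eq_append_cons_of_ne hlen hne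
  have hqc : q ++ [c] <+: q ++ c :: s := by simp
  have hqd : q ++ [d] <+: q ++ d :: t := by simp
  have hq : RightSpecial w q := ⟨c, d, hcd, factorClosed_isFactorInf w hqc.isInfix hy,
    factorClosed_isFactorInf w hqd.isInfix hvw⟩
  obtain rfl := hv.eq_of_rightSpecial hbal hm hp hpv hup hq hqd
    (isPrefix_of_isPrefix_append_cons hcd huy hv.1)
  obtain rfl : a = d := by simpa using hpv
  exact ⟨c, hcd, hqc⟩

theorem IsCompleteFirstReturn.eq_or_eq (hv : IsCompleteFirstReturn v u)
    (hv' : IsCompleteFirstReturn v' u) (hbal : BalancedUpTo (IsFactorInf w) m)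
    (hm : v.length ≤ m) (hvw : IsFactorInf w v) (hv'w : IsFactorInf w v')
    (hlen : v.length = v'.length) (hne : v ≠ v')
    (hy : IsFactorInf w y) (hylen : y.length = v.length) (huy : u <+: y) : y = v ∨ y = v' := by
  by_contra! ⟨hyv, hyv'⟩
  obtain ⟨p, a, b, s, t, hab, rfl, rfl⟩ := exists_eq_append_cons_of_ne hlen hne
  have hpa : p ++ [a] <+: p ++ a :: s := by simp
  have hpb : p ++ [b] <+: p ++ b :: t := by simp
  have hp : RightSpecial w p := ⟨a, b, hab, factorClosed_isFactorInf w hpa.isInfix hvw,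
    factorClosed_isFactorInf w hpb.isInfix hv'w⟩
  have hup := isPrefix_of_isPrefix_append_cons hab hv.1 hv'.1
  obtain ⟨c, hca, hc⟩ :=
    hv.exists_append_singleton_isPrefix hbal hm hvw hp hpa hup hy hylen huy hyv
  obtain ⟨d, hdb, hd⟩ := hv'.exists_append_singleton_isPrefix hbal (by omega) hv'w hp hpb hup hy
    (by omega) huy hyv'
  have hcd : c = d := by
    simpa using (List.prefix_of_prefix_length_le hc hd (by simp)).eq_of_length (by simp)
  exact hdb (hcd.symm.trans ((Bool.eq_not.2 hca).trans (Bool.eq_not.2 hab.symm).symm))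

/-- Otherwise `v` would always be followed by `v`, making the infinite word ultimately periodic. -/
theorem IsCompleteFirstReturn.exists_followed_by (hv : IsCompleteFirstReturn v u)
    (hv' : IsCompleteFirstReturn v' u) (hbal : BalancedUpTo (IsFactorInf w) m)
    (hw : ¬UltimatelyPeriodic w) (hm : v.length ≤ m) (hvw : IsFactorInf w v)
    (hv'w : IsFactorInf w v') (hlen : v.length = v'.length) (hne : v ≠ v') :
    ∃ x, window w x v.length = v ∧
      window w (x + (v.length - u.length)) v.length = v' := by
  by_contra! hnot
  have hlt := hv.length_lt
  refine hw (ultimatelyPeriodic_of_window_step (p := v.length - u.length) (by omega) (by omega)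
    hvw rfl fun x hx => ?_)
  refine (hv.eq_or_eq hv' hbal hm hvw hv'w hlen hne (isFactorInf_window _ _ _) (by simp)
    ?_).resolve_right (hnot x hx)
  obtain ⟨s, hs⟩ := hv.2.1
  have hslen : v.length - u.length = s.length := by simp [← hs]
  have hu : window w (x + (v.length - u.length)) u.length = u := by
    rw [hslen]
    exact window_eq_of_append (t := []) (by rw [hx, hs, List.append_nil])
  nth_rewrite 1 [← hu]
  rw [show v.length = u.length + (v.length - u.length) by omega, window_add]
  simp

theorem IsCompleteFirstReturn.isFactorInf_append (hv : IsCompleteFirstReturn v u)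
    (hv' : IsCompleteFirstReturn v' u) (hbal : BalancedUpTo (IsFactorInf w) m)
    (hw : ¬UltimatelyPeriodic w) (hm : v.length ≤ m) (hvw : IsFactorInf w v)
    (hv'w : IsFactorInf w v') (hlen : v.length = v'.length) (hne : v ≠ v')
    (hs : v = s ++ z ++ u) (ht : v' = y ++ t) : IsFactorInf w (z ++ y) := by
  obtain ⟨x, hx, hx'⟩ := hv.exists_followed_by hv' hbal hw hm hvw hv'w hlen hne
  have hz := window_eq_of_append (hx.trans hs)
  have hy := window_eq_of_append (s := []) (hx'.trans ht)
  have hzy : window w (x + s.length) (z.length + y.length) = z ++ y := by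
    rw [window_add, hz]
    simpa [hs, ← add_assoc] using hy
  exact hzy ▸ isFactorInf_window _ _ _

/-- If `v` differed from its reversal, both would be followed by the other, and around the shared
occurrence of `u` these transitions have the forms `b z b` and `a z a` with the same word `z`. -/
theorem IsCompleteFirstReturn.reverse_eq (hv : IsCompleteFirstReturn v u) (hu : u.reverse = u)
    (hbal : BalancedUpTo (IsFactorInf w) m) (hw : ¬UltimatelyPeriodic w)
    (hvw : IsFactorInf w v) (hm : v.length ≤ m) : v.reverse = v := by
  by_contra hne
  have hr : IsCompleteFirstReturn v.reverse u := hu ▸ hv.reverse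
  have hrw : IsFactorInf w v.reverse := hbal.isFactorInf_reverse hw hvw hm
  obtain ⟨p, a, b, s, hab, rfl⟩ := exists_eq_append_cons_of_reverse_ne hne
  have hr_eq : (p ++ a :: (s ++ b :: p.reverse)).reverse =
      p ++ b :: (s.reverse ++ a :: p.reverse) := by simp
  obtain ⟨t, rfl⟩ : u <+: p := isPrefix_of_isPrefix_append_cons hab hv.1 (hr_eq ▸ hr.1)
  have hb : IsFactorInf w (b :: (t.reverse ++ u ++ t ++ [b])) := by
    have := hv.isFactorInf_append hr hbal hw hm hvw hrw (by simp) (Ne.symm hne)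
      (s := u ++ t ++ a :: s) (z := b :: t.reverse) (y := u ++ t ++ [b]) (by simp [hu])
      (by rw [hr_eq, List.append_cons])
    simpa using this
  have ha : IsFactorInf w (a :: (t.reverse ++ u ++ t ++ [a])) := by
    have := hr.isFactorInf_append hv hbal hw (by rwa [List.length_reverse]) hrw hvw (by simp) hne
      (s := u ++ t ++ b :: s.reverse) (z := a :: t.reverse) (y := u ++ t ++ [a]) (by simp [hu])
      (by rw [List.append_cons])
    simpa using this
  refine hab (hbal.eq_of_cons_concat (.refl (t.reverse ++ u ++ t)) ha hb ?_)
  simp only [List.length_append, List.length_cons, List.length_reverse] at hm ⊢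
  omega

end PalindromicReturn

/-! ### Privileged and palindromic factors -/

section Palindrome

variable {w : ℕ → Bool} {u : List Bool} {a : Bool} {m n : ℕ}

theorem Privileged.reverse_eq (hu : Privileged u) (hbal : BalancedUpTo (IsFactorInf w) m)
    (hw : ¬UltimatelyPeriodic w) (huw : IsFactorInf w u) (hm : u.length ≤ m) : u.reverse = u := by
  induction hu with
  | nil => rfl
  | single a => rfl
  | ret v u _ hlt _ hret ih =>
    exact hret.reverse_eq (ih (factorClosed_isFactorInf w hret.1.isInfix huw) (by omega))
      hbal hw huw hm

/-- A palindrome is a complete first return to its longest proper palindromic prefix. -/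
theorem BalancedUpTo.privileged_of_reverse_eq (hbal : BalancedUpTo (IsFactorInf w) m)
    (hw : ¬UltimatelyPeriodic w) (hu : u.reverse = u) (huw : IsFactorInf w u)
    (hm : u.length ≤ m + 1) : Privileged u := by
  induction hn : u.length using Nat.strong_induction_on generalizing u with
  | _ n ih =>
  subst hn
  obtain hle | hlt := le_or_gt u.length 1
  · exact privileged_of_length_le_one hle
  obtain ⟨p, ⟨hpu, hp_lt, hp⟩, hmax⟩ := Set.exists_max_image
    {p | p <+: u ∧ p.length < u.length ∧ p.reverse = p} List.length
    ((List.finite_length_lt Bool u.length).subset fun _ h => h.2.1)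
    ⟨[], List.nil_prefix, by simpa using by omega, rfl⟩
  obtain ⟨s, hs⟩ : p <:+ u := by simpa [hp, hu] using List.reverse_suffix.2 hpu
  have hs_ne : s ≠ [] := by
    rintro rfl
    simp [← hs] at hp_lt
  obtain ⟨v, hvu, hret⟩ := exists_isCompleteFirstReturn_isPrefix hs_ne (hs ▸ hpu)
  rw [hs] at hvu
  have hv_len : ¬v.length < u.length := fun hv_lt =>
    (hmax v ⟨hvu, hv_lt, hret.reverse_eq hp hbal hw
      (factorClosed_isFactorInf w hvu.isInfix huw) (by omega)⟩).not_gt hret.length_lt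
  obtain rfl := hvu.eq_of_length_le (not_lt.1 hv_len)
  exact .ret _ p hlt hp_lt
    (ih _ hp_lt hp (factorClosed_isFactorInf w hpu.isInfix huw) (by omega) rfl) hret

/-- The palindromic factors of an infinite word. -/
def IsPalFactor {A : Type*} (w : ℕ → A) (u : List A) : Prop :=
  IsFactorInf w u ∧ u.reverse = u

theorem palComplexityInf_eq_ncard {A : Type*} (w : ℕ → A) (n : ℕ) :
    palComplexityInf w n = (wordsOfLength (IsPalFactor w) n).ncard := by
  simp [palComplexityInf, wordsOfLength, IsPalFactor, and_assoc]

theorem exists_eq_cons_concat_of_reverse_eq {A : Type*} {u : List A} (hu : u.reverse = u)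
    (hlen : u.length = n + 2) : ∃ a v, v.reverse = v ∧ v.length = n ∧ u = a :: (v ++ [a]) := by
  obtain _ | ⟨a, u⟩ := u
  · simp at hlen
  obtain rfl | ⟨v, b, rfl⟩ := List.eq_nil_or_concat u
  · simp at hlen
  · obtain ⟨rfl, hv, -⟩ : b = a ∧ v.reverse = v ∧ a = b := by simpa using hu
    exact ⟨b, v, hv, by simpa using hlen, by simp⟩

theorem BalancedUpTo.exists_palindromic_extension (hbal : BalancedUpTo (IsFactorInf w) m)
    (hw : ¬UltimatelyPeriodic w) (hu : u.reverse = u) (huw : IsFactorInf w u) (hm : u.length < m) :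
    ∃ a, IsFactorInf w (a :: (u ++ [a])) := by
  obtain ⟨b, hb⟩ := huw.exists_append_singleton
  have hb' : IsFactorInf w (b :: u) := by
    simpa [hu] using hbal.isFactorInf_reverse hw hb (by simpa)
  obtain ⟨c, hc⟩ := hb'.exists_append_singleton
  obtain rfl | hbc := eq_or_ne b c
  · exact ⟨b, hc⟩
  have hu_special : RightSpecial w u :=
    ⟨b, c, hbc, hb, factorClosed_isFactorInf w ⟨[b], [], by simp⟩ hc⟩
  obtain ⟨z, hz, hz_len⟩ := exists_rightSpecial hw (u.length + 1)
  obtain ⟨a, t, rfl⟩ := List.exists_cons_of_length_eq_add_one hz_len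
  obtain rfl := hbal.eq_of_rightSpecial hu_special (hz.of_isSuffix (List.suffix_cons a t))
    (by simpa using hz_len.symm) hm
  exact ⟨a, rightSpecial_iff_forall.1 hz a⟩

theorem BalancedUpTo.image_tail_dropLast (hbal : BalancedUpTo (IsFactorInf w) m)
    (hw : ¬UltimatelyPeriodic w) (hn : n < m) :
    (fun u => u.tail.dropLast) '' wordsOfLength (IsPalFactor w) (n + 2) =
      wordsOfLength (IsPalFactor w) n := by
  ext v
  constructor
  · rintro ⟨u, ⟨⟨huw, hu⟩, hlen⟩, rfl⟩
    obtain ⟨a, v, hv, rfl, rfl⟩ := exists_eq_cons_concat_of_reverse_eq hu hlen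
    have hvw : IsFactorInf w v := factorClosed_isFactorInf w ⟨[a], [a], by simp⟩ huw
    simpa only [List.tail_cons, List.dropLast_concat] using
      show v ∈ wordsOfLength (IsPalFactor w) v.length from ⟨⟨hvw, hv⟩, rfl⟩
  · rintro ⟨⟨hvw, hv⟩, rfl⟩
    obtain ⟨a, ha⟩ := hbal.exists_palindromic_extension hw hv hvw hn
    exact ⟨a :: (v ++ [a]), ⟨⟨ha, by simp [hv]⟩, by simp⟩, by simp⟩

theorem BalancedUpTo.injOn_tail_dropLast (hbal : BalancedUpTo (IsFactorInf w) m)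
    (hn : n + 2 ≤ m) :
    Set.InjOn (fun u => u.tail.dropLast) (wordsOfLength (IsPalFactor w) (n + 2)) := by
  rintro u ⟨⟨huw, hu⟩, hu_len⟩ v ⟨⟨hvw, hv⟩, hv_len⟩ huv
  obtain ⟨a, s, -, hs, rfl⟩ := exists_eq_cons_concat_of_reverse_eq hu hu_len
  obtain ⟨b, t, -, -, rfl⟩ := exists_eq_cons_concat_of_reverse_eq hv hv_len
  obtain rfl : s = t := by simpa using huv
  rw [hbal.eq_of_cons_concat (.refl s) huw hvw (by omega)]

theorem palComplexityInf_of_le_one {A : Type*} (w : ℕ → A) (hn : n ≤ 1) :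
    palComplexityInf w n = (wordsOfLength (IsFactorInf w) n).ncard := by
  rw [palComplexityInf_eq_ncard]
  refine congrArg Set.ncard (Set.ext fun u => and_congr_left ?_)
  rintro rfl
  obtain _ | ⟨a, _ | ⟨b, u⟩⟩ := u <;> simp_all [IsPalFactor]

theorem BalancedUpTo.palComplexityInf_eq (hbal : BalancedUpTo (IsFactorInf w) m)
    (hw : ¬UltimatelyPeriodic w) (hn : n ≤ m) :
    palComplexityInf w n = if Even n then 1 else 2 := by
  induction n using Nat.twoStepInduction with
  | zero =>
    rw [palComplexityInf_of_le_one w zero_le_one, hbal.ncard_wordsOfLength_isFactorInf hw hn]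
    simp
  | one =>
    rw [palComplexityInf_of_le_one w le_rfl, hbal.ncard_wordsOfLength_isFactorInf hw hn]
    simp
  | more n ih _ =>
    rw [palComplexityInf_eq_ncard, ← (hbal.injOn_tail_dropLast hn).ncard_image,
      hbal.image_tail_dropLast hw (by omega), ← palComplexityInf_eq_ncard, ih (by omega)]
    simp [Nat.even_add]

theorem BalancedUpTo.privComplexityInf_eq (hbal : BalancedUpTo (IsFactorInf w) m)
    (hw : ¬UltimatelyPeriodic w) (hn : n ≤ m) :
    privComplexityInf w n = if Even n then 1 else 2 := by
  rw [← hbal.palComplexityInf_eq hw hn]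
  refine congrArg Set.ncard (Set.ext fun u => and_congr_right fun huw => and_congr_left ?_)
  rintro rfl
  exact ⟨fun hu => hu.reverse_eq hbal hw huw hn,
    fun hu => hbal.privileged_of_reverse_eq hw hu huw (by omega)⟩

theorem BalancedUpTo.palComplexityInf_le_privComplexityInf (hbal : BalancedUpTo (IsFactorInf w) m)
    (hw : ¬UltimatelyPeriodic w) (hn : n ≤ m + 1) :
    palComplexityInf w n ≤ privComplexityInf w n :=
  Set.ncard_le_ncard
    (fun _ ⟨huw, hu, hlen⟩ => ⟨huw, hbal.privileged_of_reverse_eq hw hu huw (by omega), hlen⟩)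
    ((List.finite_length_eq Bool n).subset fun _ h => h.2.2)

/-- Both palindromic extensions of the middle `u` of a shortest unbalanced pair occur, so there
are more palindromes of length `|u| + 2` than of length `|u|`; each of them is privileged. -/
theorem balancedUpTo_of_privComplexityInf_eq (hw : ¬UltimatelyPeriodic w)
    (h : ∀ n, privComplexityInf w n = if Even n then 1 else 2) (m : ℕ) :
    BalancedUpTo (IsFactorInf w) m := by
  by_contra hm
  obtain ⟨u, hu, hbal, hext⟩ :=
    exists_unbalanced_palindrome (factorClosed_isFactorInf w) (not_forall_of_exists_not ⟨m, hm⟩)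
  have hmem (c : Bool) : c :: (u ++ [c]) ∈ wordsOfLength (IsPalFactor w) (u.length + 2) :=
    ⟨⟨hext c, by simp [hu]⟩, by simp⟩
  have hcard : palComplexityInf w (u.length + 2) ≤ palComplexityInf w u.length :=
    calc palComplexityInf w (u.length + 2)
      _ ≤ privComplexityInf w (u.length + 2) :=
        hbal.palComplexityInf_le_privComplexityInf hw le_rfl
      _ = palComplexityInf w u.length := by
        rw [h, hbal.palComplexityInf_eq hw u.length.le_succ]
        simp [Nat.even_add]
  rw [palComplexityInf_eq_ncard, palComplexityInf_eq_ncard,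
    ← hbal.image_tail_dropLast hw u.length.lt_succ_self] at hcard
  have hfin := finite_wordsOfLength (IsPalFactor w) (u.length + 2)
  have hinj := (Set.ncard_image_iff hfin).1 ((Set.ncard_image_le hfin).antisymm hcard)
  simpa using hinj (hmem true) (hmem false) (by simp)

end Palindrome

/-! ### Sturmian words are aperiodic and balanced -/

section Sturmian

theorem Sturmian.ncard_wordsOfLength {A : Type*} {w : ℕ → A} (h : Sturmian w) (n : ℕ) :
    (wordsOfLength (IsFactorInf w) n).ncard = n + 1 :=
  h n

theorem Sturmian.not_ultimatelyPeriodic {A : Type*} {w : ℕ → A} (h : Sturmian w) :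
    ¬UltimatelyPeriodic w := by
  intro hper
  obtain ⟨N, p, hp, hw⟩ := ultimatelyPeriodic_iff.1 hper
  have hsub : wordsOfLength (IsFactorInf w) (N + p) ⊆
      (fun i => window w i (N + p)) '' Set.Iio (N + p) := by
    rintro u ⟨hu, hlen⟩
    obtain ⟨i, hi⟩ := hu.exists_window_eq
    obtain ⟨j, hj, hji⟩ := exists_window_eq_lt hp hw i (N + p)
    exact ⟨j, hj, by rw [← hi, hlen, ← hji]⟩
  have hle := (Set.ncard_le_ncard hsub ((Set.finite_Iio _).image _)).trans
    (Set.ncard_image_le (Set.finite_Iio _))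
  rw [h.ncard_wordsOfLength, Set.ncard_Iio_nat] at hle
  omega

variable {w : ℕ → Bool} {u v : List Bool}

theorem Sturmian.eq_of_rightSpecial (h : Sturmian w) (hu : RightSpecial w u)
    (hv : RightSpecial w v) (hlen : u.length = v.length) : u = v := by
  have hcard := ncard_wordsOfLength_isFactorInf_succ w u.length
  rw [h.ncard_wordsOfLength, h.ncard_wordsOfLength] at hcard
  exact (Set.ncard_le_one (finite_wordsOfLength _ _)).1 (by omega) u ⟨hu, rfl⟩ v ⟨hv, hlen.symm⟩

/-- An overlap of `a u` with `b u b` puts the first letter `a` on some letter of `u` and the last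
letter `b` under its mirror image in `u`. -/
theorem window_ne_cons_of_palindrome {A : Type*} {w : ℕ → A} {u : List A} {a b : A} {x d : ℕ}
    (hu : u.reverse = u) (hab : a ≠ b) (hx : window w x (u.length + 2) = b :: (u ++ [b]))
    (hd : d < u.length + 2) : window w (x + d) (u.length + 1) ≠ a :: u := by
  intro ha
  have hbub (k : ℕ) (hk : k < u.length + 2) :
      w (x + k) = (b :: (u ++ [b]))[k]'(by simpa using Nat.le_of_lt_succ hk) :=
    apply_eq_getElem_of_window_eq (by simpa using hx) _
  have hau (k : ℕ) (hk : k < u.length + 1) :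
      w (x + d + k) = (a :: u)[k]'(by simpa using Nat.le_of_lt_succ hk) :=
    apply_eq_getElem_of_window_eq (by simpa using ha) _
  have ha_start : w (x + d) = a := by simpa using hau 0 (by omega)
  have hb_end : w (x + (u.length + 1)) = b := by simpa using hbub (u.length + 1) (by omega)
  apply hab
  obtain rfl | ⟨k, rfl⟩ : d = 0 ∨ ∃ k, d = k + 1 := by cases d <;> simp
  · simpa [← ha_start] using hbub 0 (by omega)
  obtain hk | hk : k = u.length ∨ k < u.length := by omega
  · rw [← ha_start, hk, hb_end]
  have hmirror : u[k] = u[u.length - 1 - k] := by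
    simpa using (List.getElem_of_eq hu (by simpa)).symm.trans (List.getElem_reverse (by simpa))
  calc
    a = u[k] := by
      rw [← ha_start, hbub (k + 1) (by omega), List.getElem_cons_succ, List.getElem_append_left]
    _ = u[u.length - 1 - k] := hmirror
    _ = w (x + (k + 1) + (u.length - 1 - k + 1)) := by
      rw [hau _ (by omega), List.getElem_cons_succ]
    _ = b := by rw [← hb_end]; congr 1; omega

theorem Sturmian.balancedUpTo (h : Sturmian w) (m : ℕ) : BalancedUpTo (IsFactorInf w) m := by
  by_contra hm
  obtain ⟨u, hu, -, hext⟩ :=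
    exists_unbalanced_palindrome (factorClosed_isFactorInf w) (not_forall_of_exists_not ⟨m, hm⟩)
  have hw := h.not_ultimatelyPeriodic
  have hu_special : RightSpecial w u := rightSpecial_iff_forall.2 fun c =>
    factorClosed_isFactorInf w (List.suffix_cons c _).isInfix (hext c)
  obtain ⟨z, hz, hz_len⟩ := exists_rightSpecial hw (u.length + 1)
  obtain ⟨a, t, rfl⟩ := List.exists_cons_of_length_eq_add_one hz_len
  obtain rfl := h.eq_of_rightSpecial hu_special (hz.of_isSuffix (List.suffix_cons a t))
    (by simpa using hz_len.symm)
  obtain ⟨x, hx⟩ := (hext !a).exists_window_eq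
  obtain ⟨d, hd, hd_special⟩ := exists_rightSpecial_window hw (u.length + 1) x
  rw [h.ncard_wordsOfLength] at hd
  exact window_ne_cons_of_palindrome hu (Bool.self_ne_not a) (by simpa using hx) hd
    (h.eq_of_rightSpecial hd_special hz (by simp))

end Sturmian

/-! ### Privileged complexity of ultimately periodic words -/

section FirstOccurrence

variable {A : Type*} {w : ℕ → A} {u v : List A} {i : ℕ}

/-- The position of the first occurrence of a factor `u` in `w` (`0` if `u` is not a factor). -/
noncomputable def firstOccurrence (w : ℕ → A) (u : List A) : ℕ :=
  sInf {i | window w i u.length = u}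

theorem IsFactorInf.window_firstOccurrence (h : IsFactorInf w u) :
    window w (firstOccurrence w u) u.length = u :=
  Nat.sInf_mem (s := {i | window w i u.length = u}) h.exists_window_eq

theorem firstOccurrence_le (h : window w i u.length = u) : firstOccurrence w u ≤ i :=
  Nat.sInf_le h

theorem Privileged.eq_of_firstOccurrence_add_length_eq (hu : Privileged u) (hv : Privileged v)
    (huw : IsFactorInf w u) (hvw : IsFactorInf w v)
    (h : firstOccurrence w u + u.length = firstOccurrence w v + v.length) : u = v := by
  wlog hle : u.length ≤ v.length generalizing u v
  · exact (this hv hu hvw huw h.symm (by omega)).symm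
  have hv_eq := hvw.window_firstOccurrence
  have hsuf : u <:+ v := by
    refine ⟨window w (firstOccurrence w v) (v.length - u.length), ?_⟩
    nth_rewrite 2 [← huw.window_firstOccurrence]
    rw [show firstOccurrence w u = firstOccurrence w v + (v.length - u.length) by omega,
      ← window_add, Nat.sub_add_cancel hle, hv_eq]
  obtain ⟨t, ht⟩ := hu.isPrefix_of_isSuffix hv hsuf
  have hle_first : firstOccurrence w u ≤ firstOccurrence w v :=
    firstOccurrence_le (window_eq_of_append (s := []) (hv_eq.trans ht.symm))
  exact hsuf.eq_of_length (by omega)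

theorem sum_range_two_mul_ite_even (K : ℕ) :
    ∑ n ∈ Finset.range (2 * K), (if Even n then 1 else 2) = 3 * K := by
  induction K with
  | zero => rfl
  | succ K ih =>
    rw [mul_add, mul_one, Finset.sum_range_succ, Finset.sum_range_succ, ih]
    simp only [even_two, Even.mul_right, ↓reduceIte, Nat.not_even_bit1]
    ring

/-- In an ultimately periodic word with preperiod `N` and period `p` every factor occurs first
before position `K = N + p`. First occurrences of distinct privileged factors end at distinct
positions, so fewer than `3 * K` privileged factors are shorter than `2 * K`. -/
theorem not_ultimatelyPeriodic_of_privComplexityInf_eq [Finite A]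
    (h : ∀ n, privComplexityInf w n = if Even n then 1 else 2) : ¬UltimatelyPeriodic w := by
  intro hper
  obtain ⟨N, p, hp, hw⟩ := ultimatelyPeriodic_iff.1 hper
  set K := N + p
  let S : Set (List A) := {u | (IsFactorInf w u ∧ Privileged u) ∧ u.length < 2 * K}
  have hcard : S.ncard = 3 * K := by
    rw [ncard_length_lt_eq_sum, ← sum_range_two_mul_ite_even]
    refine Finset.sum_congr rfl fun n _ => ?_
    rw [← h n, privComplexityInf]
    simp only [wordsOfLength, and_assoc]
  have hmaps : ∀ u ∈ S, firstOccurrence w u + u.length ∈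
      ((Finset.range (3 * K - 1) : Finset ℕ) : Set ℕ) := by
    rintro u ⟨⟨huw, -⟩, hlen⟩
    obtain ⟨i, hi⟩ := huw.exists_window_eq
    obtain ⟨j, hj, hji⟩ := exists_window_eq_lt hp hw i u.length
    have := firstOccurrence_le (hji.trans hi)
    exact Finset.mem_coe.2 (Finset.mem_range.2 (by omega))
  have hinj : Set.InjOn (fun u => firstOccurrence w u + u.length) S :=
    fun u ⟨⟨huw, hu⟩, _⟩ v ⟨⟨hvw, hv⟩, _⟩ => hu.eq_of_firstOccurrence_add_length_eq hv huw hvw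
  have hle := Set.ncard_le_ncard_of_injOn _ hmaps hinj (Finset.finite_toSet _)
  rw [hcard, Set.ncard_coe_finset, Finset.card_range] at hle
  omega

end FirstOccurrence

/-! ### Reduction to a binary alphabet -/

section Binary

variable {A B : Type*} {w : ℕ → A} {g : A → B}

theorem ncard_isFactorInf_comp (hg : g.Injective) {P : List B → Prop} :
    {u | IsFactorInf (g ∘ w) u ∧ P u}.ncard = {u | IsFactorInf w u ∧ P (u.map g)}.ncard := by
  rw [← Set.ncard_image_of_injective _ (List.map_injective_iff.2 hg)]
  congr 1
  ext x
  simp only [isFactorInf_comp_iff, Set.mem_ofPred_eq, Set.mem_image]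
  constructor
  · rintro ⟨⟨u, hu, rfl⟩, hP⟩
    exact ⟨u, ⟨hu, hP⟩, rfl⟩
  · rintro ⟨u, ⟨hu, hP⟩, rfl⟩
    exact ⟨⟨u, hu, rfl⟩, hP⟩

theorem sturmian_comp_iff (hg : g.Injective) : Sturmian (g ∘ w) ↔ Sturmian w := by
  simp [Sturmian, ncard_isFactorInf_comp hg]

theorem privComplexityInf_comp (hg : g.Injective) (n : ℕ) :
    privComplexityInf (g ∘ w) n = privComplexityInf w n := by
  simp [privComplexityInf, ncard_isFactorInf_comp hg, privileged_map_iff hg]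

theorem privComplexityInf_one (w : ℕ → A) :
    privComplexityInf w 1 = (wordsOfLength (IsFactorInf w) 1).ncard := by
  refine congrArg Set.ncard (Set.ext fun u => and_congr_right fun _ => ?_)
  exact and_iff_right_of_imp fun hu => privileged_of_length_le_one hu.le

theorem exists_bool_coding (h : (wordsOfLength (IsFactorInf w) 1).ncard = 2) :
    ∃ (g : Bool → A) (x : ℕ → Bool), g.Injective ∧ w = g ∘ x := by
  classical
  have hletters : wordsOfLength (IsFactorInf w) 1 = (fun a => [a]) '' Set.range w := by
    ext u
    constructor
    · rintro ⟨hu, hlen⟩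
      obtain ⟨i, hi⟩ := hu.exists_window_eq
      exact ⟨w i, ⟨i, rfl⟩, by rw [← hi, hlen]; simp [window]⟩
    · rintro ⟨_, ⟨i, rfl⟩, rfl⟩
      exact ⟨by simpa [window] using isFactorInf_window w i 1, rfl⟩
  rw [hletters, Set.ncard_image_of_injective _ List.singleton_injective] at h
  obtain ⟨a, b, hab, hrange⟩ := Set.ncard_eq_two.1 h
  refine ⟨fun c => cond c a b, fun i => decide (w i = a),
    Bool.injective_iff.2 (by simpa using hab.symm), funext fun i => ?_⟩
  have hi : w i ∈ ({a, b} : Set A) := hrange ▸ Set.mem_range_self i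
  by_cases hia : w i = a
  · simp [hia]
  · simpa [hia] using hi

end Binary

theorem sturmian_bool_iff (w : ℕ → Bool) :
    Sturmian w ↔ ∀ n, privComplexityInf w n = if Even n then 1 else 2 := by
  constructor
  · intro h n
    exact (h.balancedUpTo n).privComplexityInf_eq h.not_ultimatelyPeriodic le_rfl
  · intro h n
    have hw := not_ultimatelyPeriodic_of_privComplexityInf_eq h
    exact (balancedUpTo_of_privComplexityInf_eq hw h n).ncard_wordsOfLength_isFactorInf hw le_rfl

theorem sturmian_iff_privileged_complexity_general {A : Type*} (w : ℕ → A) :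
    Sturmian w ↔ ∀ n : ℕ, privComplexityInf w n = if Even n then 1 else 2 := by
  by_cases hletters : (wordsOfLength (IsFactorInf w) 1).ncard = 2
  · obtain ⟨g, x, hg, rfl⟩ := exists_bool_coding hletters
    simpa only [sturmian_comp_iff hg, privComplexityInf_comp hg] using sturmian_bool_iff x
  · refine iff_of_false (fun h => hletters (h 1)) fun h => hletters ?_
    rw [← privComplexityInf_one, h]
    simp

/-- An infinite word is Sturmian if and only if its privileged complexity
is 1 for even lengths and 2 for odd lengths. -/
theorem sturmian_iff_privileged_complexity {A : Type*} [Fintype A] (w : ℕ → A) :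
    Sturmian w ↔ ∀ n : ℕ, privComplexityInf w n = if Even n then 1 else 2 :=
  sturmian_iff_privileged_complexity_general w
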